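/- For every positive integer k, the semistable cone of d equals the semistable cone of k·d: Cone(d) = Cone(kd). -/

import Mathlib

open scoped BigOperators

/-- A representation of a quiver with vertex set `Q0` and arrow set `Q1`
(with source and target maps `s t : Q1 → Q0`) over a field `k`:
a finite-dimensional `k`-vector space at each vertex and a linear map for each arrow. -/
structure QRep (k : Type) [Field k] {Q0 Q1 : Type} (s t : Q1 → Q0) where
  V : Q0 → Type
  [addgrp : ∀ i, AddCommGroup (V i)]
  [mod : ∀ i, Module k (V i)]
  [fd : ∀ i, FiniteDimensional k (V i)]
  hom : ∀ a : Q1, V (s a) →ₗ[k] V (t a)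

attribute [instance] QRep.addgrp QRep.mod QRep.fd

namespace QRep

variable {k : Type} [Field k] {Q0 Q1 : Type} {s t : Q1 → Q0}

/-- The dimension vector of a representation. -/
noncomputable def dimVec (M : QRep k s t) : Q0 → ℕ := fun i => Module.finrank k (M.V i)

/-- A family of subspaces is a subrepresentation if it is invariant under all arrow maps. -/
def IsSubrep (M : QRep k s t) (U : ∀ i, Submodule k (M.V i)) : Prop :=
  ∀ a : Q1, ∀ x ∈ U (s a), M.hom a x ∈ U (t a)

/-- The dimension vector of a family of subspaces. -/
noncomputable def subDim (M : QRep k s t) (U : ∀ i, Submodule k (M.V i)) : Q0 → ℕ :=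
  fun i => Module.finrank k (U i)

/-- The subrepresentation determined by an invariant family of subspaces. -/
def subRep (M : QRep k s t) (U : ∀ i, Submodule k (M.V i)) (h : M.IsSubrep U) :
    QRep k s t where
  V := fun i => U i
  hom := fun a => (M.hom a).restrict (fun x hx => h a x hx)

/-- The quotient representation by an invariant family of subspaces. -/
def quotRep (M : QRep k s t) (U : ∀ i, Submodule k (M.V i)) (h : M.IsSubrep U) :
    QRep k s t where
  V := fun i => M.V i ⧸ U i
  hom := fun a => (U (s a)).mapQ (U (t a)) (M.hom a) (fun x hx => h a x hx)

/-- Direct sum of two representations. -/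
def dsum (M N : QRep k s t) : QRep k s t where
  V := fun i => M.V i × N.V i
  hom := fun a => (M.hom a).prodMap (N.hom a)

variable [Fintype Q0]

/-- The pairing `θ(d) = θ · d` of a stability parameter with a dimension vector. -/
def pair (θ : Q0 → ℝ) (d : Q0 → ℕ) : ℝ := ∑ i, θ i * (d i : ℝ)

/-- `θ`-semistability: `θ(M) = 0` and `θ(M') ≤ 0` for all subrepresentations. -/
def Semistable (θ : Q0 → ℝ) (M : QRep k s t) : Prop :=
  pair θ M.dimVec = 0 ∧
    ∀ U : ∀ i, Submodule k (M.V i), M.IsSubrep U → pair θ (M.subDim U) ≤ 0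

/-- `θ`-stability: `θ(M) = 0` and `θ(M') < 0` for all proper nonzero subrepresentations. -/
def Stable (θ : Q0 → ℝ) (M : QRep k s t) : Prop :=
  pair θ M.dimVec = 0 ∧
    ∀ U : ∀ i, Submodule k (M.V i), M.IsSubrep U →
      U ≠ (fun _ => ⊥) → U ≠ (fun _ => ⊤) → pair θ (M.subDim U) < 0

end QRep

section Defs

variable (k : Type) [Field k] {Q0 Q1 : Type} (s t : Q1 → Q0)

/-- `e` is a generic subdimension vector of `d` (Schofield's characterization as definition):
every representation of dimension vector `d` admits a subrepresentation of dimension vector `e`. -/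
def GenericSub (e d : Q0 → ℕ) : Prop :=
  e ≤ d ∧ ∀ M : QRep k s t, M.dimVec = d →
    ∃ U : ∀ i, Submodule k (M.V i), M.IsSubrep U ∧ M.subDim U = e

variable [Fintype Q0]

/-- The semistable cone of `d`: stability parameters orthogonal to `d` admitting a
semistable representation of dimension vector `d`. -/
def SstCone (d : Q0 → ℕ) : Set (Q0 → ℝ) :=
  {θ | QRep.pair θ d = 0 ∧ ∃ M : QRep k s t, M.dimVec = d ∧ QRep.Semistable θ M}

/-- The wall `W_e`: parameters `θ` orthogonal to `d` and `e` such that some `θ`-semistable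
representation of dimension vector `d` has a subrepresentation of dimension vector `e`. -/
def Wall (d e : Q0 → ℕ) : Set (Q0 → ℝ) :=
  {θ | QRep.pair θ d = 0 ∧ QRep.pair θ e = 0 ∧
    ∃ (M : QRep k s t) (U : ∀ i, Submodule k (M.V i)),
      M.dimVec = d ∧ M.IsSubrep U ∧ M.subDim U = e ∧ QRep.Semistable θ M}

/-- GIT equivalence of stability parameters: equal semistable loci. -/
def GITEquiv (d : Q0 → ℕ) (θ η : Q0 → ℝ) : Prop :=
  ∀ M : QRep k s t, M.dimVec = d → (QRep.Semistable θ M ↔ QRep.Semistable η M)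

end Defs

/-- The hyperplane `H_e` inside the stability space of `d`. -/
def Hset {Q0 : Type} [Fintype Q0] (d e : Q0 → ℕ) : Set (Q0 → ℝ) :=
  {θ | QRep.pair θ d = 0 ∧ QRep.pair θ e = 0}

section Euler

variable {Q0 Q1 : Type} [Fintype Q0] [Fintype Q1]

/-- The Euler form of the quiver. -/
def euler (s t : Q1 → Q0) (x y : Q0 → ℤ) : ℤ :=
  (∑ i, x i * y i) - ∑ a, x (s a) * y (t a)

/-- `ext(d, e)`: the maximum of `−⟨d', e⟩` over generic subdimension vectors `d' ↪ d`. -/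
noncomputable def extGen (k : Type) [Field k] (s t : Q1 → Q0) (d e : Q0 → ℕ) : ℤ :=
  sSup {z : ℤ | ∃ d' : Q0 → ℕ, GenericSub k s t d' d ∧
    z = -(euler s t (fun i => (d' i : ℤ)) (fun i => (e i : ℤ)))}

end Euler

section Schur

variable {Q0 Q1 : Type} (s t : Q1 → Q0)

/-- Coordinates on the representation space `Rep(Q, d)`. -/
def RepCoords (d : Q0 → ℕ) : Type := Σ a : Q1, Fin (d (t a)) × Fin (d (s a))

/-- The representation associated to a point of the representation space. -/
def matToRep (k : Type) [Field k] (d : Q0 → ℕ)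
    (m : ∀ a : Q1, Matrix (Fin (d (t a))) (Fin (d (s a))) k) : QRep k s t where
  V := fun i => Fin (d i) → k
  hom := fun a => Matrix.mulVecLin (m a)

/-- A nonzero representation is indecomposable if it is not a direct sum of two nonzero
subrepresentations. -/
def Indecomposable (k : Type) [Field k] (M : QRep k s t) : Prop :=
  (∃ i, Module.finrank k (M.V i) ≠ 0) ∧
    ¬ ∃ U W : ∀ i, Submodule k (M.V i), M.IsSubrep U ∧ M.IsSubrep W ∧
        U ≠ (fun _ => ⊥) ∧ W ≠ (fun _ => ⊥) ∧ ∀ i, IsCompl (U i) (W i)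

/-- `d` is a Schur root: a general representation of dimension vector `d` is indecomposable,
i.e. all representations outside the vanishing locus of some nonzero polynomial on the
representation space are indecomposable. -/
def IsSchurRoot (k : Type) [Field k] (d : Q0 → ℕ) : Prop :=
  ∃ p : MvPolynomial (RepCoords s t d) k, p ≠ 0 ∧
    ∀ m : ∀ a : Q1, Matrix (Fin (d (t a))) (Fin (d (s a))) k,
      MvPolynomial.eval (fun x => m x.1 x.2.1 x.2.2) p ≠ 0 →
        Indecomposable s t k (matToRep s t k d m)

end Schur

section Helpers

open MvPolynomial

lemma exists_deriv_aux {k L J : Type} [Field k] [CharZero k] [Field L] [Algebra k L]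
    [Algebra.EssFiniteType k L] (φ : MvPolynomial J k →ₐ[k] L) (hφ : Function.Injective φ)
    (c : J → L) :
    ∃ δ : L →+ L, (∀ a b, δ (a * b) = a * δ b + δ a * b) ∧ ∀ j, δ (φ (X j)) = c j := by
  let A := MvPolynomial J k
  let : Algebra A L := φ.toRingHom.toAlgebra
  have : IsScalarTower k A L := IsScalarTower.of_algebraMap_eq fun r => (φ.commutes r).symm
  have : FaithfulSMul A L := (faithfulSMul_iff_algebraMap_injective A L).2 hφ
  let K0 := FractionRing A
  let : Algebra K0 L := FractionRing.liftAlgebra A L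
  have : IsScalarTower A K0 L := FractionRing.isScalarTower_liftAlgebra A L
  have : IsScalarTower k K0 L := IsScalarTower.of_algebraMap_eq fun r => by
    rw [IsScalarTower.algebraMap_apply k A K0, ← IsScalarTower.algebraMap_apply A K0 L,
      ← IsScalarTower.algebraMap_apply k A L]
  have : CharZero K0 := charZero_of_injective_algebraMap (algebraMap k K0).injective
  have : Algebra.EssFiniteType K0 L := Algebra.EssFiniteType.of_comp k K0 L
  have : Algebra.FormallySmooth K0 L := Algebra.FormallySmooth.of_perfectField
  have : Algebra.FormallySmooth A K0 := Algebra.FormallySmooth.of_isLocalization (nonZeroDivisors A)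
  have : Algebra.FormallySmooth A L := Algebra.FormallySmooth.comp A K0 L
  let h : A →ₐ[k] TrivSqZeroExt L L :=
    aeval fun j => (TrivSqZeroExt.inl (φ (X j)) + TrivSqZeroExt.inr (c j))
  have hfst : ∀ x, (h x).fst = φ x := by
    intro x
    have : (TrivSqZeroExt.fstHom k L L).comp h = φ := by
      apply MvPolynomial.algHom_ext
      intro j
      simp [h]
    exact congrArg (fun f => f x) this
  let : Algebra A (TrivSqZeroExt L L) := h.toRingHom.toAlgebra
  let g : TrivSqZeroExt L L →ₐ[A] L :=
    { (TrivSqZeroExt.fstHom k L L).toRingHom with commutes' := fun x => hfst x }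
  have hg : Function.Surjective g := fun x => ⟨TrivSqZeroExt.inl x, rfl⟩
  have hn : IsNilpotent (RingHom.ker (g : TrivSqZeroExt L L →+* L)) := by
    refine ⟨2, ?_⟩
    refine (pow_two (M := Ideal (TrivSqZeroExt L L)) _).trans ?_
    rw [Ideal.zero_eq_bot, eq_bot_iff, Ideal.mul_le]
    intro r hr s hs
    have hr' : r.fst = 0 := hr
    have hs' : s.fst = 0 := hs
    simp only [Ideal.mem_bot]
    ext <;> simp [hr', hs']
  let τ := Algebra.FormallySmooth.liftOfSurjective (AlgHom.id A L) g hg hn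
  have hτ : ∀ x, (τ x).fst = x := fun x =>
    Algebra.FormallySmooth.liftOfSurjective_apply (AlgHom.id A L) g hg hn x
  refine ⟨⟨⟨fun x => (τ x).snd, by simp⟩, by simp⟩, ?_, ?_⟩
  · intro a b
    simp [hτ]
  · intro j
    have : τ (algebraMap A L (X j)) = algebraMap A _ (X j) := τ.commutes _
    have h2 : (τ (φ (X j))).snd = (h (X j)).snd := congrArg TrivSqZeroExt.snd this
    have h3 : h (X j) = TrivSqZeroExt.inl (φ (X j)) + TrivSqZeroExt.inr (c j) := aeval_X _ _
    rw [h3] at h2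
    exact h2.trans (by simp)

lemma nullst_aux {k κ : Type} [Field k] [IsAlgClosed k] [Field κ] [Algebra k κ]
    (T : Set κ) (hT : T.Finite) : Nonempty (Algebra.adjoin k T →ₐ[k] k) := by
  have : Algebra.FiniteType k (Algebra.adjoin k T) :=
    (Subalgebra.fg_iff_finiteType _).1 (Subalgebra.fg_def.2 ⟨T, hT, rfl⟩)
  obtain ⟨m, hm⟩ := Ideal.exists_maximal (Algebra.adjoin k T)
  let := Ideal.Quotient.field m
  have := finite_of_finite_type_of_isJacobsonRing k (Algebra.adjoin k T ⧸ m)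
  have hb := IsAlgClosed.algebraMap_bijective_of_isIntegral (k := k) (K := Algebra.adjoin k T ⧸ m)
  exact ⟨(AlgEquiv.ofBijective (Algebra.ofId k _) hb).symm.toAlgHom.comp (Ideal.Quotient.mkₐ k m)⟩

set_option linter.unusedSectionVars false

section Gen

variable {Q0 Q1 : Type} (s t : Q1 → Q0) (D : Q0 → Type)

/-- index type of coordinates on the representation space -/
abbrev XV := Σ a : Q1, D (t a) × D (s a)

/-- index type of the parameters -/
abbrev ZV := (Σ i, D i × D i) ⊕ XV s t D

variable [∀ i, Fintype (D i)] [∀ i, DecidableEq (D i)] (S : ∀ i, Finset (D i))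

/-- generic strictly lower block matrix, evaluated at a point -/
def Ymat {R : Type} [CommRing R] (z : ZV s t D → R) (i : Q0) : Matrix (D i) (D i) R :=
  Matrix.of fun p q => if q ∈ S i ∧ p ∉ S i then z (Sum.inl ⟨i, p, q⟩) else 0

/-- generic upper block matrix, evaluated at a point -/
def Bmat {R : Type} [CommRing R] (z : ZV s t D → R) (a : Q1) :
    Matrix (D (t a)) (D (s a)) R :=
  Matrix.of fun p q => if q ∈ S (s a) ∧ p ∉ S (t a) then 0 else z (Sum.inr ⟨a, p, q⟩)

/-- the parametrization -/
def Pmat {R : Type} [CommRing R] (z : ZV s t D → R) (a : Q1) :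
    Matrix (D (t a)) (D (s a)) R :=
  (1 + Ymat s t D S z (t a)) * Bmat s t D S z a * (1 - Ymat s t D S z (s a))

lemma Ymat_sq {R : Type} [CommRing R] (z : ZV s t D → R) (i : Q0) :
    Ymat s t D S z i * Ymat s t D S z i = 0 := by
  ext p q
  simp only [Matrix.mul_apply, Matrix.zero_apply]
  apply Finset.sum_eq_zero
  intro r _
  simp only [Ymat, Matrix.of_apply]
  split_ifs <;> simp_all

lemma Ymat_inv {R : Type} [CommRing R] (z : ZV s t D → R) (i : Q0) :
    (1 + Ymat s t D S z i) * (1 - Ymat s t D S z i) = 1 := by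
  have := Ymat_sq s t D S z i
  rw [mul_sub, add_mul, mul_one, add_mul, this, one_mul]; simp

lemma Ymat_inv' {R : Type} [CommRing R] (z : ZV s t D → R) (i : Q0) :
    (1 - Ymat s t D S z i) * (1 + Ymat s t D S z i) = 1 := by
  have := Ymat_sq s t D S z i
  rw [mul_add, sub_mul, mul_one, sub_mul, this, one_mul]; simp

lemma Ymat_map {R R' : Type} [CommRing R] [CommRing R'] (f : R →+* R') (z : ZV s t D → R)
    (i : Q0) : (Ymat s t D S z i).map f = Ymat s t D S (fun v => f (z v)) i := by
  ext p q
  simp only [Ymat, Matrix.map_apply, Matrix.of_apply]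
  split_ifs <;> simp

lemma Bmat_map {R R' : Type} [CommRing R] [CommRing R'] (f : R →+* R') (z : ZV s t D → R)
    (i : Q1) : (Bmat s t D S z i).map f = Bmat s t D S (fun v => f (z v)) i := by
  ext p q
  simp only [Bmat, Matrix.map_apply, Matrix.of_apply]
  split_ifs <;> simp

lemma Pmat_map {R R' : Type} [CommRing R] [CommRing R'] (f : R →+* R') (z : ZV s t D → R)
    (a : Q1) : (Pmat s t D S z a).map f = Pmat s t D S (fun v => f (z v)) a := by
  simp only [Pmat]
  rw [Matrix.map_mul, Matrix.map_mul, Matrix.map_add f (map_add f), Matrix.map_sub f (map_sub f),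
    Ymat_map, Bmat_map, Ymat_map, Matrix.map_one f (map_zero f) (map_one f),
    Matrix.map_one f (map_zero f) (map_one f)]

/-- the polynomial parametrization as an algebra map -/
noncomputable def phiMap (R : Type) [CommRing R] :
    MvPolynomial (XV s t D) R →ₐ[R] MvPolynomial (ZV s t D) R :=
  aeval fun x => Pmat s t D S (fun v => (X v : MvPolynomial (ZV s t D) R)) x.1 x.2.1 x.2.2

/-- no extensions -/
def Ext0 {R : Type} [CommRing R] (N : ∀ a, Matrix (D (t a)) (D (s a)) R) : Prop :=
  (∀ a p q, q ∈ S (s a) → p ∉ S (t a) → N a p q = 0) ∧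
  ∀ C : ∀ a, Matrix (D (t a)) (D (s a)) R, ∃ Y : ∀ i, Matrix (D i) (D i) R,
    ∀ a p q, q ∈ S (s a) → p ∉ S (t a) →
      (Y (t a) * N a - N a * Y (s a)) p q = C a p q

lemma map_deriv_mul {L : Type} [CommRing L] {l m n : Type} [Fintype m] (δ : L →+ L)
    (hδ : ∀ a b, δ (a * b) = a * δ b + δ a * b) (A : Matrix l m L) (B : Matrix m n L) :
    (A * B).map δ = A * B.map δ + A.map δ * B := by
  ext p q
  simp [Matrix.mul_apply, hδ, Finset.sum_add_distrib]

lemma ext0_of_inj [Finite Q0] [Finite Q1] (k : Type) [Field k] [CharZero k]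
    (h : Function.Injective (phiMap s t D S k)) :
    ∃ (L : Type) (_ : Field L) (_ : Algebra k L) (N : ∀ a, Matrix (D (t a)) (D (s a)) L),
      Ext0 s t D S N := by
  let R := MvPolynomial (ZV s t D) k
  let L := FractionRing R
  let ι : R →+* L := algebraMap R L
  let z : ZV s t D → L := fun v => ι (X v)
  have : Finite (XV s t D) := inferInstance
  have : Finite (ZV s t D) := inferInstance
  have : Algebra.EssFiniteType R L := Algebra.EssFiniteType.of_isLocalization L (nonZeroDivisors R)
  have : Algebra.EssFiniteType k L := Algebra.EssFiniteType.comp k R L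
  let φ : MvPolynomial (XV s t D) k →ₐ[k] L :=
    (IsScalarTower.toAlgHom k R L).comp (phiMap s t D S k)
  have hφ : Function.Injective φ := (IsFractionRing.injective R L).comp h
  have hφX : ∀ x : XV s t D, φ (X x) = Pmat s t D S z x.1 x.2.1 x.2.2 := by
    intro x
    change ι (phiMap s t D S k (X x)) = _
    rw [phiMap, aeval_X, ← Matrix.map_apply (f := ι), Pmat_map]
  refine ⟨L, inferInstance, inferInstance, Bmat s t D S z, ?_, ?_⟩
  · intro a p q hq hp
    simp [Bmat, hq, hp]
  · intro C
    let cm : ∀ a, Matrix (D (t a)) (D (s a)) L := fun a =>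
      (1 + Ymat s t D S z (t a)) * C a * (1 - Ymat s t D S z (s a))
    let c : XV s t D → L := fun x => cm x.1 x.2.1 x.2.2
    obtain ⟨δ, hδ, hδc⟩ := exists_deriv_aux φ hφ c
    refine ⟨fun i => (1 - Ymat s t D S z i) * (Ymat s t D S z i).map δ, ?_⟩
    intro a p q hq hp
    have hδ1 : δ 1 = 0 := by
      have := hδ 1 1
      simpa using this
    set Yt := Ymat s t D S z (t a) with hYt
    set Ys := Ymat s t D S z (s a) with hYs
    set N := Bmat s t D S z a with hN
    set M := Pmat s t D S z a with hM
    have h1 : M * (1 + Ys) = (1 + Yt) * N := by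
      rw [hM, Pmat, Matrix.mul_assoc, Ymat_inv', Matrix.mul_one]
    have hM1 : M.map δ = (1 + Yt) * C a * (1 - Ys) := by
      ext p q
      rw [Matrix.map_apply, hM, ← hφX ⟨a, p, q⟩, hδc]
    have hone : ∀ i, (1 : Matrix (D i) (D i) L).map δ = 0 := by
      intro i
      ext p q
      simp [Matrix.one_apply, apply_ite δ, hδ1]
    have h2 : (M * (1 + Ys)).map δ = ((1 + Yt) * N).map δ := by rw [h1]
    rw [map_deriv_mul δ hδ, map_deriv_mul δ hδ, Matrix.map_add δ (map_add δ),
      Matrix.map_add δ (map_add δ), hone, hone, zero_add, zero_add, hM1] at h2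
    have e1 : (1 - Yt) * (M * Ys.map δ) = N * ((1 - Ys) * Ys.map δ) := by
      rw [hM, Pmat, ← hYt, ← hYs, ← hN]
      simp only [← Matrix.mul_assoc]
      rw [hYt, Ymat_inv', Matrix.one_mul]
    have e2 : (1 - Yt) * ((1 + Yt) * C a * (1 - Ys) * (1 + Ys)) = C a := by
      simp only [← Matrix.mul_assoc]
      rw [hYt, Ymat_inv', Matrix.one_mul, Matrix.mul_assoc, hYs, Ymat_inv', Matrix.mul_one]
    have e3 : (1 - Yt) * ((1 + Yt) * N.map δ) = N.map δ := by
      rw [← Matrix.mul_assoc, hYt, Ymat_inv', Matrix.one_mul]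
    have h3 := congrArg (fun A : Matrix (D (t a)) (D (s a)) L => (1 - Yt) * A) h2
    beta_reduce at h3
    rw [Matrix.mul_add, e1, e2, Matrix.mul_add, e3, ← Matrix.mul_assoc] at h3
    have h4 := congrFun (congrFun h3 p) q
    have h5 : N.map δ p q = 0 := by
      simp [hN, Bmat, hq, hp]
    rw [Matrix.add_apply, Matrix.add_apply, h5, zero_add] at h4
    rw [Matrix.sub_apply, sub_eq_iff_eq_add']
    simp only [← Matrix.mul_assoc] at h4 ⊢
    exact h4.symm

/-- replicated matrices -/
lemma ext0_rep {R : Type} [CommRing R] (N : ∀ a, Matrix (D (t a)) (D (s a)) R)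
    (h : Ext0 s t D S N) (m : ℕ) :
    Ext0 s t (fun i => D i × Fin m) (fun i => S i ×ˢ Finset.univ)
      (fun a => Matrix.of fun p q => if p.2 = q.2 then N a p.1 q.1 else 0) := by
  obtain ⟨h1, h2⟩ := h
  refine ⟨?_, ?_⟩
  · rintro a ⟨p, α⟩ ⟨q, β⟩ hq hp
    simp only [Finset.mem_product, Finset.mem_univ, and_true] at hq hp
    simp [h1 a p q hq hp]
  · intro C
    choose Y hY using fun (αβ : Fin m × Fin m) =>
      h2 (fun a => Matrix.of fun p q => C a (p, αβ.1) (q, αβ.2))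
    refine ⟨fun i => Matrix.of fun p q => Y (p.2, q.2) i p.1 q.1, ?_⟩
    rintro a ⟨p, α⟩ ⟨q, β⟩ hq hp
    simp only [Finset.mem_product, Finset.mem_univ, and_true] at hq hp
    have := hY (α, β) a p q hq hp
    simp only [Matrix.sub_apply, Matrix.mul_apply, Matrix.of_apply, Fintype.sum_prod_type] at this ⊢
    simpa using this

lemma chain_rule_aux {J Z K : Type} [Field K] [Fintype J]
    (φ : MvPolynomial J K →ₐ[K] MvPolynomial Z K)
    (δ : Derivation K (MvPolynomial Z K) (MvPolynomial Z K)) (f : MvPolynomial J K) :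
    δ (φ f) = ∑ j, φ (pderiv j f) * δ (φ (X j)) := by
  classical
  induction f using MvPolynomial.induction_on with
  | C r =>
    have : φ (C r) = algebraMap K _ r := φ.commutes r
    rw [this]; simp
  | add p q hp hq => simp [hp, hq, add_mul, Finset.sum_add_distrib]
  | mul_X p n hp =>
    rw [map_mul, Derivation.leibniz, hp]
    simp only [smul_eq_mul, Derivation.leibniz, pderiv_X, map_add, map_mul, add_mul,
      Finset.sum_add_distrib, Finset.mul_sum]
    congr 1
    · rw [Finset.sum_eq_single n]
      · simp
      · intro b _ hb
        simp [hb.symm]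
      · simp
    · apply Finset.sum_congr rfl; intros; ring

lemma const_of_pderiv {J K : Type} [Field K] [CharZero K] (f : MvPolynomial J K)
    (h : ∀ j, pderiv j f = 0) : f = C (coeff 0 f) := by
  classical
  ext m
  rw [coeff_C]
  split_ifs with h0
  · rw [h0]
  · obtain ⟨j, hj⟩ : ∃ j, m j ≠ 0 := by
      by_contra hc
      push Not at hc
      exact h0 (by ext j; simp [hc j])
    have h1 := coeff_pderiv (i := j) f (m - Finsupp.single j 1)
    have h2 : m - Finsupp.single j 1 + Finsupp.single j 1 = m := by
      apply tsub_add_cancel_of_le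
      rw [Finsupp.single_le_iff]
      omega
    rw [h j, h2] at h1
    simp only [coeff_zero] at h1
    rcases mul_eq_zero.1 h1.symm with h3 | h3
    · exact h3
    · exact absurd h3 (Nat.cast_add_one_ne_zero _)

lemma jac_inj {J Z K : Type} [Field K] [CharZero K] [Fintype J] [DecidableEq J]
    (φ : MvPolynomial J K →ₐ[K] MvPolynomial Z K) (z0 : Z → K)
    (h : ∀ j0 : J, ∃ c : Z → K, ∀ j,
      eval z0 (mkDerivation K (fun v => (C (c v) : MvPolynomial Z K)) (φ (X j)))
        = if j0 = j then 1 else 0) : Function.Injective φ := by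
  choose c hc using h
  let A : Matrix J J (MvPolynomial Z K) := Matrix.of fun j0 j =>
    mkDerivation K (fun v => (C (c j0 v) : MvPolynomial Z K)) (φ (X j))
  have hA : A.det ≠ 0 := by
    intro h0
    have h1 : (eval z0) A.det = 0 := by rw [h0]; simp
    rw [RingHom.map_det] at h1
    have h2 : (eval z0).mapMatrix A = 1 := by
      ext i j
      simp [A, hc, Matrix.one_apply]
    rw [h2] at h1
    simp at h1
  have key : ∀ f, φ f = 0 → ∀ j, φ (pderiv j f) = 0 := by
    intro f hf
    have h1 : A.mulVec (fun j => φ (pderiv j f)) = 0 := by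
      ext1 j0
      have := chain_rule_aux φ (mkDerivation K (fun v => (C (c j0 v) : MvPolynomial Z K))) f
      rw [hf, map_zero] at this
      simp only [Matrix.mulVec, dotProduct, A, Matrix.of_apply, Pi.zero_apply]
      rw [this]
      exact Finset.sum_congr rfl fun _ _ => mul_comm _ _
    have h2 := Matrix.eq_zero_of_mulVec_eq_zero hA h1
    exact fun j => congrFun h2 j
  have main : ∀ n, ∀ f : MvPolynomial J K, f.totalDegree ≤ n → φ f = 0 → f = 0 := by
    intro n
    induction n with
    | zero =>
      intro f hf h0
      rw [totalDegree_eq_zero_iff_eq_C.1 (Nat.le_zero.1 hf)] at h0 ⊢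
      have : φ (C (coeff 0 f)) = algebraMap K _ (coeff 0 f) := φ.commutes _
      rw [this] at h0
      have := (algebraMap K (MvPolynomial Z K)).injective (h0.trans (map_zero _).symm)
      rw [this]; simp
    | succ n ih =>
      intro f hf h0
      have h1 : ∀ j, pderiv j f = 0 := by
        intro j
        refine ih _ ?_ (key f h0 j)
        refine Finset.sup_le fun m hm => ?_
        rw [mem_support_iff, coeff_pderiv] at hm
        have h3 := le_totalDegree (mem_support_iff.2 (left_ne_zero_of_mul hm))
        rw [Finsupp.sum_add_index' (by simp) (by simp), Finsupp.sum_single_index rfl] at h3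
        omega
      have h2 := const_of_pderiv f h1
      refine ih f ?_ h0
      rw [h2]; simp
  rw [injective_iff_map_eq_zero]
  exact fun f hf => main _ f le_rfl hf

lemma inj_of_ext0 [Finite Q1] {K : Type} [Field K] [CharZero K]
    (N : ∀ a, Matrix (D (t a)) (D (s a)) K) (h : Ext0 s t D S N) :
    Function.Injective (phiMap s t D S K) := by
  classical
  obtain ⟨hN, hE⟩ := h
  have : Fintype Q1 := Fintype.ofFinite Q1
  let z0 : ZV s t D → K := Sum.elim (fun _ => 0) (fun x => N x.1 x.2.1 x.2.2)
  have hY0 : ∀ i, Ymat s t D S z0 i = 0 := by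
    intro i; ext p q; simp [Ymat, z0]
  have hB0 : ∀ a, Bmat s t D S z0 a = N a := by
    intro a; ext p q
    simp only [Bmat, z0, Matrix.of_apply, Sum.elim_inr]
    split_ifs with hh
    · exact (hN a p q hh.1 hh.2).symm
    · rfl
  apply jac_inj (phiMap s t D S K) z0
  intro j0
  let Cm : ∀ a, Matrix (D (t a)) (D (s a)) K := fun a => Matrix.of fun p q =>
    if j0 = ⟨a, p, q⟩ then 1 else 0
  obtain ⟨Y, hY⟩ := hE Cm
  let Ym : ∀ i, Matrix (D i) (D i) K := fun i => Matrix.of fun p q =>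
    if q ∈ S i ∧ p ∉ S i then Y i p q else 0
  have hYm : ∀ a p q, q ∈ S (s a) → p ∉ S (t a) →
      (Ym (t a) * N a - N a * Ym (s a)) p q = Cm a p q := by
    intro a p q hq hp
    rw [← hY a p q hq hp]
    simp only [Matrix.sub_apply, Matrix.mul_apply]
    congr 1
    · apply Finset.sum_congr rfl
      intro r _
      by_cases hr : r ∈ S (t a)
      · simp [Ym, hr, hp]
      · simp [hN a r q hq hr]
    · apply Finset.sum_congr rfl
      intro r _
      by_cases hr : r ∈ S (s a)
      · simp [hN a p r hr hp]
      · simp [Ym, hr, hq]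
  let Bd : ∀ a, Matrix (D (t a)) (D (s a)) K := fun a =>
    Cm a - (Ym (t a) * N a - N a * Ym (s a))
  let c : ZV s t D → K := Sum.elim (fun x => Y x.1 x.2.1 x.2.2) (fun x => Bd x.1 x.2.1 x.2.2)
  refine ⟨c, ?_⟩
  let der := mkDerivation K (fun v => (C (c v) : MvPolynomial (ZV s t D) K))
  let δ : MvPolynomial (ZV s t D) K →+ K :=
    (eval z0).toAddMonoidHom.comp (der : MvPolynomial (ZV s t D) K →ₗ[K] _).toAddMonoidHom
  have hδ : ∀ f g, δ (f * g) = eval z0 f * δ g + δ f * eval z0 g := by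
    intro f g
    simp [δ, Derivation.leibniz]
    ring
  have hδX : ∀ v, δ (X v) = c v := by
    intro v
    simp [δ, der, mkDerivation_X]
  have hδ1 : δ 1 = 0 := by simp [δ]
  have hmul : ∀ {l m n : Type} [Fintype m] (A : Matrix l m (MvPolynomial (ZV s t D) K))
      (B : Matrix m n (MvPolynomial (ZV s t D) K)),
      (A * B).map δ = A.map (eval z0) * B.map δ + A.map δ * B.map (eval z0) := by
    intro l m n _ A B
    ext p q
    simp [Matrix.mul_apply, hδ, Finset.sum_add_distrib]
  have hone : ∀ i, (1 : Matrix (D i) (D i) (MvPolynomial (ZV s t D) K)).map δ = 0 := by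
    intro i
    ext p q
    simp [Matrix.one_apply, apply_ite δ, hδ1]
  have hYδ : ∀ i, (Ymat s t D S (fun v => (X v : MvPolynomial (ZV s t D) K)) i).map δ = Ym i := by
    intro i; ext p q
    simp only [Ymat, Matrix.map_apply, Matrix.of_apply, Ym]
    split_ifs
    · rw [hδX]; rfl
    · simp
  have hev : ∀ v, (eval z0) (X v) = z0 v := by simp
  intro j
  obtain ⟨a, p, q⟩ := j
  change δ (phiMap s t D S K (X ⟨a, p, q⟩)) = Cm a p q
  rw [phiMap, aeval_X, ← Matrix.map_apply (f := δ), Pmat, hmul, hmul]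
  rw [Matrix.map_mul, Matrix.map_add _ (map_add _), Matrix.map_sub _ (map_sub _),
    Matrix.map_add _ (map_add _), Matrix.map_sub _ (map_sub _), hone, hone, hYδ, hYδ,
    Ymat_map, Ymat_map, Bmat_map, Matrix.map_one _ (map_zero _) (map_one _),
    Matrix.map_one _ (map_zero _) (map_one _)]
  simp only [hev]
  rw [hY0, hY0, hB0]
  simp only [add_zero, zero_add, zero_sub, sub_zero, Matrix.one_mul, Matrix.mul_one,
    Matrix.mul_neg]
  by_cases hh : q ∈ S (s a) ∧ p ∉ S (t a)
  · rw [← hYm a p q hh.1 hh.2]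
    have : (Bmat s t D S (fun v => (X v : MvPolynomial (ZV s t D) K)) a).map δ p q = 0 := by
      simp [Bmat, hh]
    simp only [Matrix.add_apply, Matrix.neg_apply, Matrix.sub_apply, this]
    ring
  · have : (Bmat s t D S (fun v => (X v : MvPolynomial (ZV s t D) K)) a).map δ p q = Bd a p q := by
      simp only [Bmat, Matrix.map_apply, Matrix.of_apply]
      rw [if_neg hh, hδX]; rfl
    simp only [Matrix.add_apply, Matrix.neg_apply, this]
    simp only [Bd, Matrix.sub_apply]
    ring

/-- a (split) subrepresentation over a ring with ranks given by `E` -/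
def HasSub (E : Q0 → Type) [∀ i, Fintype (E i)] [∀ i, DecidableEq (E i)] {R : Type} [CommRing R]
    (W : ∀ a, Matrix (D (t a)) (D (s a)) R) : Prop :=
  ∃ (Z : ∀ i, Matrix (D i) (E i) R) (Z' : ∀ i, Matrix (E i) (D i) R)
    (T : ∀ a, Matrix (E (t a)) (E (s a)) R),
    (∀ i, Z' i * Z i = 1) ∧ ∀ a, W a * Z (s a) = Z (t a) * T a

lemma hasSub_Pmat {R : Type} [CommRing R] (z : ZV s t D → R) :
    HasSub s t D (fun i => S i) (Pmat s t D S z) := by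
  refine ⟨fun i => (1 + Ymat s t D S z i).submatrix id Subtype.val,
    fun i => (1 - Ymat s t D S z i).submatrix Subtype.val id,
    fun a => (Bmat s t D S z a).submatrix Subtype.val Subtype.val, ?_, ?_⟩
  · intro i
    ext p q
    have h0 := congrFun (congrFun (Ymat_inv' s t D S z i) p.1) q.1
    simp only [Matrix.mul_apply] at h0
    simp only [Matrix.mul_apply, Matrix.submatrix_apply, id]
    rw [h0]
    by_cases hpq : p = q
    · subst hpq; simp
    · rw [Matrix.one_apply_ne hpq, Matrix.one_apply_ne (fun h => hpq (Subtype.ext h))]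
  · intro a
    have h1 : Pmat s t D S z a * (1 + Ymat s t D S z (s a)) =
        (1 + Ymat s t D S z (t a)) * Bmat s t D S z a := by
      rw [Pmat, Matrix.mul_assoc, Ymat_inv', Matrix.mul_one]
    ext p q
    have h2 := congrFun (congrFun h1 p) q.1
    simp only [Matrix.mul_apply] at h2
    simp only [Matrix.mul_apply, Matrix.submatrix_apply, id]
    rw [h2, Finset.univ_eq_attach, Finset.sum_attach (S (t a))
      (fun r => (1 + Ymat s t D S z (t a)) p r * Bmat s t D S z a r q.1)]
    symm
    apply Finset.sum_subset (Finset.subset_univ _)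
    intro r _ hr
    simp [Bmat, hr]

variable (E : Q0 → Type) [∀ i, Fintype (E i)] [∀ i, DecidableEq (E i)]

lemma HasSub.map {R R' : Type} [CommRing R] [CommRing R'] (f : R →+* R')
    (W : ∀ a, Matrix (D (t a)) (D (s a)) R) (h : HasSub s t D E W) :
    HasSub s t D E (fun a => (W a).map f) := by
  obtain ⟨Z, Z', T, h1, h2⟩ := h
  refine ⟨fun i => (Z i).map f, fun i => (Z' i).map f, fun a => (T a).map f, ?_, ?_⟩
  · intro i
    rw [← Matrix.map_mul, h1, Matrix.map_one f (map_zero f) (map_one f)]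
  · intro a
    rw [← Matrix.map_mul, h2, Matrix.map_mul]

lemma exists_minor {K n e : Type} [Field K] [Fintype n] [Fintype e] [DecidableEq e]
    (Z : Matrix n e K) (Z' : Matrix e n K) (h : Z' * Z = 1) :
    ∃ τ : e → n, (Z.submatrix τ id).det ≠ 0 := by
  classical
  by_contra hc
  push Not at hc
  have h1 : (Z' * Z).det = 0 := by
    have h2 : (Z' * Z) = fun i => ∑ p, Z' i p • Z p := by
      ext i j
      simp [Matrix.mul_apply]
    rw [h2]
    change Matrix.detRowAlternating (fun i => ∑ p, Z' i p • Z p) = 0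
    rw [← AlternatingMap.coe_multilinearMap, MultilinearMap.map_sum]
    apply Finset.sum_eq_zero
    intro τ _
    rw [MultilinearMap.map_smul_univ]
    have : (Matrix.detRowAlternating : AlternatingMap K (e → K) K e).toMultilinearMap
        (fun i => Z (τ i)) = 0 := hc τ
    erw [this]
    simp
  rw [h] at h1
  simp at h1

lemma exists_good {K n e : Type} [Field K] [Fintype n] [Fintype e] [DecidableEq e]
    (O : ValuationSubring K) (Z : Matrix n e K) (Z' : Matrix e n K) (h : Z' * Z = 1) :
    ∃ (τ : e → n) (G G' : Matrix e e K) (Y : Matrix n e O), G * G' = 1 ∧ G' * G = 1 ∧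
      Y.map O.subtype = Z * G ∧ (∀ i j, Y (τ i) j = (1 : Matrix e e O) i j) := by
  classical
  obtain ⟨τ0, h0⟩ := exists_minor Z Z' h
  have : Nonempty (e → n) := ⟨τ0⟩
  obtain ⟨τ, hτ⟩ := Finite.exists_max fun τ : e → n => O.valuation (Z.submatrix τ id).det
  have hne : (Z.submatrix τ id).det ≠ 0 := by
    intro h1
    have := hτ τ0
    rw [h1, map_zero, le_zero_iff, map_eq_zero] at this
    exact h0 this
  set A := Z.submatrix τ id with hA
  have hu : IsUnit A.det := isUnit_iff_ne_zero.2 hne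
  have hmem : ∀ p j, (Z * A⁻¹) p j ∈ O := by
    intro p j
    have h1 : (Z * A⁻¹) p j = (Z.submatrix (Function.update τ j p) id).det / A.det := by
      have h2 : (Z.submatrix (Function.update τ j p) id) = A.updateRow j (Z p) := by
        ext x y
        by_cases hx : x = j
        · subst hx; simp
        · simp [hx, hA]
      rw [h2, ← Matrix.cramer_transpose_apply, Matrix.cramer_eq_adjugate_mulVec, Matrix.inv_def,
        Ring.inverse_eq_inv', ← Matrix.adjugate_transpose, Matrix.mulVec_transpose,
        Matrix.mul_smul, Matrix.smul_apply, div_eq_inv_mul]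
      rfl
    rw [← ValuationSubring.valuation_le_one_iff, h1, map_div₀]
    apply div_le_one_of_le₀ (hτ _)
    exact zero_le
  refine ⟨τ, A⁻¹, A, Matrix.of fun p j => ⟨(Z * A⁻¹) p j, hmem p j⟩, Matrix.nonsing_inv_mul _ hu,
    Matrix.mul_nonsing_inv _ hu, ?_, ?_⟩
  · ext p j; rfl
  · intro i j
    apply Subtype.ext
    have h1 := congrFun (congrFun (Matrix.mul_nonsing_inv _ hu) i) j
    have h2 : (Z * A⁻¹) (τ i) j = (A * A⁻¹) i j := rfl
    simp only [Matrix.of_apply]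
    rw [h2, h1, Matrix.one_apply, Matrix.one_apply]
    split_ifs <;> simp

lemma HasSub.toVal {K : Type} [Field K] (O : ValuationSubring K)
    (W : ∀ a, Matrix (D (t a)) (D (s a)) O)
    (h : HasSub s t D E (fun a => (W a).map O.subtype)) : HasSub s t D E W := by
  obtain ⟨Z, Z', T, h1, h2⟩ := h
  choose τ G G' Y hG hG' hY hY1 using fun i => exists_good O (Z i) (Z' i) (h1 i)
  have hY2 : ∀ i, (Y i).submatrix (τ i) id = 1 := by
    intro i; ext x y; rw [Matrix.submatrix_apply]; exact congrArg _ (hY1 i x y)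
  have hinj : Function.Injective O.subtype := Subtype.val_injective
  refine ⟨Y, fun i => Matrix.of fun x p => if p = τ i x then 1 else 0,
    fun a => (W a * Y (s a)).submatrix (τ (t a)) id, ?_, ?_⟩
  · intro i
    ext x y
    simp [Matrix.mul_apply, hY1]
  · intro a
    have e1 : (W a * Y (s a)).map O.subtype =
        (Y (t a)).map O.subtype * (G' (t a) * T a * G (s a)) := by
      rw [Matrix.map_mul, hY, hY, ← Matrix.mul_assoc, h2]
      simp only [Matrix.mul_assoc]
      rw [← Matrix.mul_assoc (G (t a)), hG, Matrix.one_mul]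
    have e2 : ((W a * Y (s a)).submatrix (τ (t a)) id).map O.subtype =
        G' (t a) * T a * G (s a) := by
      rw [← Matrix.submatrix_map, e1]
      ext x y
      have := congrFun (congrArg (fun A => A.map O.subtype) (hY2 (t a))) x
      simp only [Matrix.submatrix_apply, Matrix.mul_apply, Matrix.map_apply, id, hY1,
        Matrix.one_apply]
      simp
    apply Matrix.map_injective hinj
    beta_reduce
    rw [e1, Matrix.map_mul, e2]

lemma HasSub.descend [Finite Q0] [Finite Q1] {k κ : Type} [Field k] [IsAlgClosed k] [Field κ]
    [Algebra k κ] (W : ∀ a, Matrix (D (t a)) (D (s a)) k)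
    (h : HasSub s t D E (fun a => (W a).map (algebraMap k κ))) : HasSub s t D E W := by
  obtain ⟨Z, Z', T, h1, h2⟩ := h
  let f1 : (Σ i, D i × E i) → κ := fun x => Z x.1 x.2.1 x.2.2
  let f2 : (Σ i, E i × D i) → κ := fun x => Z' x.1 x.2.1 x.2.2
  let f3 : (Σ a, E (t a) × E (s a)) → κ := fun x => T x.1 x.2.1 x.2.2
  let U := Set.range f1 ∪ Set.range f2 ∪ Set.range f3
  have hU : U.Finite := ((Set.finite_range _).union (Set.finite_range _)).union (Set.finite_range _)
  obtain ⟨ψ⟩ := nullst_aux (k := k) U hU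
  let A := Algebra.adjoin k U
  have hsub : U ⊆ A := Algebra.subset_adjoin
  have m1 : ∀ i p q, Z i p q ∈ A := fun i p q => hsub (Or.inl (Or.inl ⟨⟨i, p, q⟩, rfl⟩))
  have m2 : ∀ i p q, Z' i p q ∈ A := fun i p q => hsub (Or.inl (Or.inr ⟨⟨i, p, q⟩, rfl⟩))
  have m3 : ∀ i p q, T i p q ∈ A := fun i p q => hsub (Or.inr ⟨⟨i, p, q⟩, rfl⟩)
  have hinj : Function.Injective A.val.toRingHom := Subtype.val_injective
  have hA : HasSub s t D E (fun a => (W a).map (algebraMap k A)) := by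
    refine ⟨fun i => Matrix.of fun p q => ⟨Z i p q, m1 i p q⟩,
      fun i => Matrix.of fun p q => ⟨Z' i p q, m2 i p q⟩,
      fun i => Matrix.of fun p q => ⟨T i p q, m3 i p q⟩, ?_, ?_⟩
    · intro i
      apply Matrix.map_injective hinj
      beta_reduce
      rw [Matrix.map_mul, Matrix.map_one _ (map_zero _) (map_one _)]
      exact h1 i
    · intro a
      apply Matrix.map_injective hinj
      beta_reduce
      rw [Matrix.map_mul, Matrix.map_mul]
      exact h2 a
  have := HasSub.map s t D E ψ.toRingHom _ hA
  convert this using 2 with a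
  ext p q
  exact (ψ.commutes _).symm

lemma hasSub_of_inj_aux [Finite Q0] [Finite Q1] {k K L : Type} [Field k] [IsAlgClosed k] [Field K]
    [Algebra k K] [Field L] (h : Function.Injective (phiMap s t D S K))
    (ι : MvPolynomial (ZV s t D) K →+* L) (hι : Function.Injective ι)
    (W : ∀ a, Matrix (D (t a)) (D (s a)) k) : HasSub s t D (fun i => S i) W := by
  let φ : MvPolynomial (XV s t D) K →+* L := ι.comp (phiMap s t D S K).toRingHom
  have hφ : Function.Injective φ := hι.comp h
  let w : XV s t D → K := fun x => algebraMap k K (W x.1 x.2.1 x.2.2)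
  let ev : MvPolynomial (XV s t D) K →+* K := eval w
  have hev : ∀ x, ev (C (w x) - X x) = 0 := by
    intro x
    rw [map_sub]
    change eval w (C (w x)) - eval w (X x) = 0
    rw [eval_C, eval_X, sub_self]
  let A : Subring L := φ.range
  let ρ : MvPolynomial (XV s t D) K ≃+* A := RingEquiv.ofBijective φ.rangeRestrict
    ⟨fun x y hxy => hφ (congrArg Subtype.val hxy), φ.rangeRestrict_surjective⟩
  let evA : A →+* K := ev.comp ρ.symm.toRingHom
  obtain ⟨O, hAO, hI⟩ := Ideal.image_subset_nonunits_valuationSubring (RingHom.ker evA)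
    (RingHom.ker_ne_top evA)
  let incl : MvPolynomial (XV s t D) K →+* O := (Subring.inclusion hAO).comp ρ.toRingHom
  have hincl : ∀ x, ((incl x : O) : L) = φ x := fun x => rfl
  let κ := IsLocalRing.ResidueField O
  let res : MvPolynomial (XV s t D) K →+* κ := (IsLocalRing.residue O).comp incl
  have hker : ∀ f, ev f = 0 → res f = 0 := by
    intro f hf
    have h1 : (φ f) ∈ O.nonunits := by
      apply hI
      refine ⟨ρ f, ?_, rfl⟩
      change ev (ρ.symm (ρ f)) = 0
      rw [RingEquiv.symm_apply_apply, hf]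
    exact (IsLocalRing.residue_eq_zero_iff _).2 (O.coe_mem_nonunits_iff.1 h1)
  have hres : ∀ x, res (C (w x)) = res (X x) := by
    intro x
    have h0 := hker _ (hev x)
    rw [map_sub] at h0
    exact sub_eq_zero.1 h0
  let algκ : Algebra k κ := (res.comp (C.comp (algebraMap k K))).toAlgebra
  have h1 : HasSub s t D (fun i => S i) (Pmat s t D S (fun v => ι (X v))) := hasSub_Pmat s t D S _
  let WO : ∀ a, Matrix (D (t a)) (D (s a)) O := fun a => Matrix.of fun p q => incl (X ⟨a, p, q⟩)
  have e1 : (fun a => (WO a).map O.subtype) = Pmat s t D S (fun v => ι (X v)) := by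
    funext a
    rw [← Pmat_map]
    ext p q
    change ι (phiMap s t D S K (X ⟨a, p, q⟩)) = _
    rw [phiMap, aeval_X]
    rfl
  have h2 : HasSub s t D (fun i => S i) WO := by
    apply HasSub.toVal
    rw [e1]
    exact h1
  have h3 := HasSub.map s t D _ (IsLocalRing.residue O) _ h2
  have e2 : (fun a => (W a).map (algebraMap k κ)) =
      fun a => (WO a).map (IsLocalRing.residue O) := by
    funext a
    ext p q
    exact hres ⟨a, p, q⟩
  apply HasSub.descend s t D (fun i => S i) (κ := κ)
  rw [e2]
  exact h3

lemma hasSub_of_inj [Finite Q0] [Finite Q1] {k K : Type} [Field k] [IsAlgClosed k] [Field K]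
    [Algebra k K] (h : Function.Injective (phiMap s t D S K))
    (W : ∀ a, Matrix (D (t a)) (D (s a)) k) : HasSub s t D (fun i => S i) W :=
  hasSub_of_inj_aux s t D S h (algebraMap _ (FractionRing (MvPolynomial (ZV s t D) K)))
    (IsFractionRing.injective _ _) W

end Gen

end Helpers

section Final

open MvPolynomial

lemma exists_graph {k D : Type} [Field k] [Fintype D] [DecidableEq D] (U : Submodule k (D → k)) :
    ∃ (S : Finset D) (c : D → D → k), S.card = Module.finrank k U ∧
      (∀ u ∈ U, ∀ p, p ∉ S → u p = ∑ q ∈ S, c p q * u q) ∧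
      ∀ q ∈ S, (fun p => if p ∈ S then (if p = q then 1 else 0) else c p q) ∈ U := by
  classical
  let v : D → (D → k) ⧸ U := fun i => U.mkQ (Pi.single i 1)
  obtain ⟨κ, a, ha, hspan, hli⟩ := exists_linearIndependent' k v
  have hfin : Finite κ := Finite.of_injective a ha
  have : Fintype κ := Fintype.ofFinite κ
  have htop : Submodule.span k (Set.range v) = ⊤ := by
    have h1 : Set.range v = Set.image U.mkQ (Set.range fun i : D => (Pi.single i 1 : D → k)) := by
      rw [← Set.range_comp]; rfl
    have h2 : Submodule.span k (Set.range fun i : D => (Pi.single i 1 : D → k)) = ⊤ := by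
      have := (Pi.basisFun k D).span_eq
      convert this using 2
      congr 1; ext i; simp
    rw [h1, ← Submodule.map_span, h2, Submodule.map_top, Submodule.range_mkQ]
  rw [htop] at hspan
  let b : Module.Basis κ k ((D → k) ⧸ U) := Module.Basis.mk hli hspan.ge
  let T : Finset D := Finset.univ.map ⟨a, ha⟩
  have hT : ∀ p, p ∈ T ↔ ∃ j, a j = p := by intro p; simp [T]
  let S := Tᶜ
  have hS : ∀ p, p ∈ S ↔ ∀ j, a j ≠ p := by intro p; simp [S, hT]
  have hx : ∀ q, ∃ x : κ → k, U.mkQ (Pi.single q 1) = ∑ j, x j • U.mkQ (Pi.single (a j) 1) := by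
    intro q
    refine ⟨fun j => b.repr (U.mkQ (Pi.single q 1)) j, ?_⟩
    conv_lhs => rw [← b.sum_repr (U.mkQ (Pi.single q 1))]
    apply Finset.sum_congr rfl
    intro j _
    congr 1
    simp [b, v]
  choose x hx using hx
  let y : D → D → k := fun q => ∑ j, x q j • (Pi.single (a j) 1 : D → k)
  have hyS : ∀ q, ∀ p ∈ S, y q p = 0 := by
    intro q p hp
    rw [hS] at hp
    simp only [y, Finset.sum_apply, Pi.smul_apply]
    apply Finset.sum_eq_zero
    intro j _
    rw [Pi.single_eq_of_ne (hp j).symm, smul_zero]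
  have hyU : ∀ q, (Pi.single q 1 : D → k) - y q ∈ U := by
    intro q
    rw [← Submodule.ker_mkQ U, LinearMap.mem_ker, map_sub, hx, sub_eq_zero, map_sum]
    simp only [map_smul]
  have huniq : ∀ u ∈ U, (∀ p ∈ S, u p = 0) → u = 0 := by
    intro u hu h0
    have h1 : u = ∑ j, u (a j) • (Pi.single (a j) 1 : D → k) := by
      ext p
      simp only [Finset.sum_apply, Pi.smul_apply]
      by_cases hp : p ∈ T
      · obtain ⟨j, rfl⟩ := (hT p).1 hp
        rw [Finset.sum_eq_single j]
        · simp
        · intro j' _ hj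
          rw [Pi.single_eq_of_ne (fun h => hj (ha h).symm), smul_zero]
        · simp
      · have hp' : p ∈ S := by simpa [S] using hp
        rw [h0 p hp', Finset.sum_eq_zero]
        intro j _
        rw [Pi.single_eq_of_ne ((hS p).1 hp' j).symm, smul_zero]
    have h2 : ∑ j, u (a j) • (v ∘ a) j = 0 := by
      have h3 : U.mkQ u = 0 := by rwa [← LinearMap.mem_ker, Submodule.ker_mkQ]
      rw [h1, map_sum] at h3
      simp only [map_smul] at h3
      exact h3
    have h3 := (Fintype.linearIndependent_iff.1 hli) _ h2
    rw [h1]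
    exact Finset.sum_eq_zero fun j _ => by rw [h3 j, zero_smul]
  have hvq : ∀ q ∈ S, (fun p => if p ∈ S then (if p = q then 1 else 0) else - y q p) =
      (Pi.single q 1 : D → k) - y q := by
    intro q hq
    ext p
    by_cases hp : p ∈ S
    · simp [hp, hyS q p hp, Pi.single_apply]
    · have : p ≠ q := fun h => hp (h ▸ hq)
      simp [hp, Pi.single_apply, this]
  refine ⟨S, fun p q => - y q p, ?_, ?_, ?_⟩
  · have h1 := Module.finrank_eq_card_basis b
    have h2 := U.finrank_quotient_add_finrank
    rw [Module.finrank_fintype_fun_eq_card] at h2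
    have h3 : T.card = Fintype.card κ := by simp [T]
    have h4 : S.card = Fintype.card D - T.card := Finset.card_compl T
    omega
  · intro u hu p hp
    have h1 : u - ∑ q ∈ S, u q • ((Pi.single q 1 : D → k) - y q) = 0 := by
      apply huniq
      · exact U.sub_mem hu (U.sum_mem fun q _ => U.smul_mem _ (hyU q))
      · intro p hp
        simp only [Pi.sub_apply, Finset.sum_apply, Pi.smul_apply, smul_eq_mul]
        rw [Finset.sum_eq_single p]
        · simp [hyS p p hp]
        · intro q _ hq
          simp [hyS q p hp, Pi.single_eq_of_ne hq.symm]
        · intro h; exact absurd hp h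
    have h2 := congrFun h1 p
    simp only [Pi.sub_apply, Finset.sum_apply, Pi.smul_apply, smul_eq_mul, Pi.zero_apply] at h2
    rw [sub_eq_zero] at h2
    rw [h2]
    apply Finset.sum_congr rfl
    intro q hq
    have : p ≠ q := fun h => hp (h ▸ hq)
    rw [Pi.single_eq_of_ne this]; ring
  · intro q hq
    rw [hvq q hq]
    exact hyU q

variable {Q0 Q1 : Type} (s t : Q1 → Q0) (D : Q0 → Type)
  [∀ i, Fintype (D i)] [∀ i, DecidableEq (D i)]

lemma exists_Pmat {k : Type} [Field k] (w : ∀ a, Matrix (D (t a)) (D (s a)) k)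
    (U : ∀ i, Submodule k (D i → k))
    (hU : ∀ a, ∀ u ∈ U (s a), (w a).mulVec u ∈ U (t a)) :
    ∃ S : ∀ i, Finset (D i), (∀ i, (S i).card = Module.finrank k (U i)) ∧
      ∃ z : ZV s t D → k, w = Pmat s t D S z := by
  choose S c h1 h2 h3 using fun i => exists_graph (U i)
  refine ⟨S, h1, ?_⟩
  let y : ∀ i, Matrix (D i) (D i) k := fun i => Matrix.of fun p q =>
    if q ∈ S i ∧ p ∉ S i then c i p q else 0
  let z : ZV s t D → k := Sum.elim (fun x => c x.1 x.2.1 x.2.2)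
    (fun x => (show Matrix (D (t x.1)) (D (s x.1)) k from
      (1 - y (t x.1)) * w x.1 * (1 + y (s x.1))) x.2.1 x.2.2)
  have hy : ∀ i, Ymat s t D S z i = y i := fun i => rfl
  have hB : ∀ a, Bmat s t D S z a = (1 - y (t a)) * w a * (1 + y (s a)) := by
    intro a
    ext p q
    simp only [Bmat, Matrix.of_apply]
    split_ifs with h
    · obtain ⟨hq, hp⟩ := h
      let u : D (s a) → k := fun r => (1 + y (s a)) r q
      have hu : u ∈ U (s a) := by
        convert h3 (s a) q hq using 1
        funext r
        simp only [u, y, Matrix.add_apply, Matrix.of_apply, Matrix.one_apply]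
        by_cases hr : r ∈ S (s a)
        · simp [hr]
        · have : r ≠ q := fun h => hr (h ▸ hq)
          simp [hr, hq, this]
      have h4 := h2 (t a) _ (hU a u hu) p hp
      rw [Matrix.mul_assoc, Matrix.sub_mul, Matrix.one_mul, Matrix.sub_apply]
      symm
      rw [sub_eq_zero]
      change (w a).mulVec u p = _
      rw [h4, Matrix.mul_apply]
      rw [← Finset.sum_subset (Finset.subset_univ (S (t a)))]
      · apply Finset.sum_congr rfl
        intro r hr
        simp only [y, Matrix.of_apply, hr, hp, not_false_eq_true, and_self, if_true]
        rfl
      · intro r _ hr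
        simp [y, hr]
    · rfl
  refine ⟨z, ?_⟩
  funext a
  rw [Pmat, hB, ← hy, ← hy]
  rw [← Matrix.mul_assoc, ← Matrix.mul_assoc, Ymat_inv, Matrix.one_mul, Matrix.mul_assoc, Ymat_inv,
    Matrix.mul_one]

lemma exists_inj [Finite Q0] {k : Type} [Field k] [Infinite k] (T : (∀ i, Finset (D i)) → Prop)
    (h : ∀ w : ∀ a, Matrix (D (t a)) (D (s a)) k, ∃ S, T S ∧
      ∃ z : ZV s t D → k, w = Pmat s t D S z) :
    ∃ S, T S ∧ Function.Injective (phiMap s t D S k) := by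
  classical
  by_contra hc
  push Not at hc
  have hf : ∀ S, ∃ f : MvPolynomial (XV s t D) k, f ≠ 0 ∧ (T S → phiMap s t D S k f = 0) := by
    intro S
    by_cases hS : T S
    · have h1 := hc S hS
      rw [injective_iff_map_eq_zero] at h1
      push Not at h1
      obtain ⟨f, hf, hf'⟩ := h1
      exact ⟨f, hf', fun _ => hf⟩
    · exact ⟨1, one_ne_zero, fun h => absurd h hS⟩
  choose f hf0 hf using hf
  have : Finite (∀ i, Finset (D i)) := inferInstance
  have : Fintype (∀ i, Finset (D i)) := Fintype.ofFinite _
  have hne : ∏ S, f S ≠ 0 := Finset.prod_ne_zero_iff.2 fun S _ => hf0 S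
  apply hne
  apply MvPolynomial.funext
  intro x
  obtain ⟨S, hS, z, hz⟩ := h (fun a => Matrix.of fun p q => x ⟨a, p, q⟩)
  rw [map_zero, map_prod]
  apply Finset.prod_eq_zero (Finset.mem_univ S)
  have h1 : (eval z).comp (phiMap s t D S k).toRingHom = eval x := by
    apply MvPolynomial.ringHom_ext
    · intro r
      simp [phiMap]
    · intro v
      have h2 := congrFun (congrFun (congrFun hz v.1) v.2.1) v.2.2
      simp only [Matrix.of_apply] at h2
      rw [eval_X]
      change eval z (phiMap s t D S k (X v)) = _
      rw [phiMap, aeval_X, ← Matrix.map_apply (f := eval z), Pmat_map]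
      simp only [eval_X]
      exact h2.symm
  rw [← h1]
  change eval z (phiMap s t D S k (f S)) = 0
  rw [hf S hS, map_zero]

lemma hasSub_copies [Finite Q0] [Finite Q1] {k : Type} [Field k] [IsAlgClosed k] [CharZero k]
    (S : ∀ i, Finset (D i)) (h : Function.Injective (phiMap s t D S k)) (m : ℕ)
    (W : ∀ a, Matrix (D (t a) × Fin m) (D (s a) × Fin m) k) :
    HasSub s t (fun i => D i × Fin m) (fun i => ↥(S i ×ˢ (Finset.univ : Finset (Fin m)))) W := by
  obtain ⟨L, _, _, N, hN⟩ := ext0_of_inj s t D S k h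
  have : CharZero L := charZero_of_injective_algebraMap (algebraMap k L).injective
  have h1 := ext0_rep s t D S N hN m
  have h2 := inj_of_ext0 s t _ _ _ h1
  exact hasSub_of_inj s t _ _ h2 W

lemma subrep_of_hasSub {k : Type} [Field k] (M : QRep k s t)
    (b : ∀ i, Module.Basis (D i) k (M.V i))
    (E : Q0 → Type) [∀ i, Fintype (E i)] [∀ i, DecidableEq (E i)]
    (h : HasSub s t D E (fun a => LinearMap.toMatrix (b (s a)) (b (t a)) (M.hom a))) :
    ∃ U : ∀ i, Submodule k (M.V i), M.IsSubrep U ∧ ∀ i, M.subDim U i = Fintype.card (E i) := by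
  obtain ⟨Z, Z', T, h1, h2⟩ := h
  let L : ∀ i, (E i → k) →ₗ[k] M.V i := fun i =>
    (b i).equivFun.symm.toLinearMap ∘ₗ (Z i).mulVecLin
  have hL : ∀ i e, (b i).equivFun (L i e) = (Z i).mulVec e := by
    intro i e
    exact (b i).equivFun.apply_symm_apply _
  refine ⟨fun i => LinearMap.range (L i), ?_, ?_⟩
  · rintro a _ ⟨e, rfl⟩
    refine ⟨(T a).mulVec e, ?_⟩
    apply (b (t a)).equivFun.injective
    rw [hL, Matrix.mulVec_mulVec, ← h2 a, ← Matrix.mulVec_mulVec, ← hL]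
    exact LinearMap.toMatrix_mulVec_repr (b (s a)) (b (t a)) (M.hom a) (L (s a) e)
  · intro i
    have hinj : Function.Injective (L i) := by
      intro x y hxy
      have h3 := congrArg (fun v => (Z' i).mulVec ((b i).equivFun v)) hxy
      simp only [hL, Matrix.mulVec_mulVec, h1, Matrix.one_mulVec] at h3
      exact h3
    rw [QRep.subDim, LinearMap.finrank_range_of_inj hinj, Module.finrank_fintype_fun_eq_card]

lemma pair_add [Fintype Q0] (θ : Q0 → ℝ) (x y : Q0 → ℕ) :
    QRep.pair θ (fun i => x i + y i) = QRep.pair θ x + QRep.pair θ y := by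
  simp [QRep.pair, mul_add, Finset.sum_add_distrib]

lemma pair_mul [Fintype Q0] (θ : Q0 → ℝ) (m : ℕ) (x : Q0 → ℕ) :
    QRep.pair θ (fun i => m * x i) = m * QRep.pair θ x := by
  simp only [QRep.pair, Finset.mul_sum]
  apply Finset.sum_congr rfl
  intro i _
  push_cast; ring

lemma finrank_prod_sub {k V W : Type} [Field k] [AddCommGroup V] [Module k V] [AddCommGroup W]
    [Module k W] [FiniteDimensional k V] [FiniteDimensional k W] (U : Submodule k (V × W)) :
    Module.finrank k U = Module.finrank k (U.comap (LinearMap.inl k V W)) +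
      Module.finrank k (U.map (LinearMap.snd k V W)) := by
  have h1 := LinearMap.finrank_range_add_finrank_ker ((LinearMap.snd k V W).domRestrict U)
  rw [LinearMap.range_domRestrict] at h1
  let e : U.comap (LinearMap.inl k V W) ≃ₗ[k] LinearMap.ker ((LinearMap.snd k V W).domRestrict U) :=
    { toFun := fun x => ⟨⟨(x.1, 0), x.2⟩, rfl⟩
      map_add' := fun x y => by ext <;> simp
      map_smul' := fun r x => by ext <;> simp
      invFun := fun y => ⟨y.1.1.1, by
        have h2 : y.1.1.2 = 0 := y.2
        have h3 := y.1.2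
        rw [Submodule.mem_comap]
        convert h3
        exact Prod.ext rfl h2.symm⟩
      left_inv := fun x => rfl
      right_inv := fun y => by
        have h2 : y.1.1.2 = 0 := y.2
        ext
        · rfl
        · exact h2.symm }
  rw [e.finrank_eq]
  omega

lemma semistable_dsum [Fintype Q0] {k : Type} [Field k] (θ : Q0 → ℝ) (M N : QRep k s t)
    (hM : QRep.Semistable θ M) (hN : QRep.Semistable θ N) :
    QRep.Semistable θ (M.dsum N) := by
  refine ⟨?_, ?_⟩
  · have : (M.dsum N).dimVec = fun i => M.dimVec i + N.dimVec i := by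
      funext i
      exact Module.finrank_prod
    rw [this, pair_add, hM.1, hN.1, add_zero]
  · intro U hU
    have : (M.dsum N).subDim U = fun i =>
        M.subDim (fun i => (U i).comap (LinearMap.inl k (M.V i) (N.V i))) i +
        N.subDim (fun i => (U i).map (LinearMap.snd k (M.V i) (N.V i))) i := by
      funext i
      exact finrank_prod_sub (V := M.V i) (W := N.V i) (U i)
    rw [this, pair_add]
    apply add_nonpos
    · apply hM.2
      intro a x hx
      have := hU a _ hx
      change (M.hom a x, N.hom a 0) ∈ U (t a) at this
      rw [map_zero] at this
      exact this
    · apply hN.2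
      rintro a _ ⟨x, hx, rfl⟩
      exact ⟨_, hU a x hx, rfl⟩

lemma cone_mul [Fintype Q0] {k : Type} [Field k] (θ : Q0 → ℝ) (M : QRep k s t)
    (hM : QRep.Semistable θ M) (m : ℕ) :
    ∃ N : QRep k s t, N.dimVec = (fun i => (m + 1) * M.dimVec i) ∧ QRep.Semistable θ N := by
  induction m with
  | zero => exact ⟨M, by simp, hM⟩
  | succ m ih =>
    obtain ⟨N, hN, hN'⟩ := ih
    refine ⟨N.dsum M, ?_, semistable_dsum s t θ N M hN' hM⟩
    funext i
    have h1 : (N.dsum M).dimVec i = N.dimVec i + M.dimVec i := Module.finrank_prod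
    rw [h1, hN]
    ring

end Final

/-- for every positive integer `m`, `Cone(d) = Cone(m·d)`. -/
theorem stmt6 (k : Type) [Field k] [IsAlgClosed k] [CharZero k]
    {Q0 Q1 : Type} [Fintype Q0] [Fintype Q1] (s t : Q1 → Q0) (d : Q0 → ℕ)
    (m : ℕ) (hm : 0 < m) :
    SstCone k s t d = SstCone k s t (fun i => m * d i) := by
  ext θ
  constructor
  · rintro ⟨h1, M, rfl, hM⟩
    obtain ⟨N, hN, hN'⟩ := cone_mul s t θ M hM (m - 1)
    rw [Nat.sub_add_cancel hm] at hN
    exact ⟨by rw [pair_mul, h1, mul_zero], N, hN, hN'⟩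
  · rintro ⟨h1, M, hM, hM'⟩
    have hm' : (0 : ℝ) < m := Nat.cast_pos.2 hm
    have h0 : QRep.pair θ d = 0 := by
      rw [pair_mul] at h1
      exact (mul_eq_zero.1 h1).resolve_left hm'.ne'
    refine ⟨h0, ?_⟩
    by_contra hc
    push Not at hc
    obtain ⟨S, hS, hinj⟩ := exists_inj s t (fun i => Fin (d i)) (k := k)
      (fun S => 0 < QRep.pair θ (fun i => (S i).card)) (by
        intro w
        have hd : (matToRep s t k d w).dimVec = d := by
          funext i
          exact Module.finrank_fin_fun k
        have h2 := hc (matToRep s t k d w) hd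
        rw [QRep.Semistable, hd] at h2
        push Not at h2
        obtain ⟨U, hU, hpos⟩ := h2 h0
        obtain ⟨S, hS, hz⟩ := exists_Pmat s t (fun i => Fin (d i)) w U (fun a u hu => hU a u hu)
        refine ⟨S, ?_, hz⟩
        have h3 : (fun i => (S i).card) = (matToRep s t k d w).subDim U := by
          funext i
          exact hS i
        rw [h3]
        exact hpos)
    have hdim : ∀ i, Module.finrank k (M.V i) = m * d i := fun i => congrFun hM i
    let b : ∀ i, Module.Basis (Fin (d i) × Fin m) k (M.V i) := fun i =>
      (Module.finBasisOfFinrankEq k (M.V i) (hdim i)).reindex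
        (finProdFinEquiv.symm.trans (Equiv.prodComm _ _))
    obtain ⟨U, hU, hU'⟩ := subrep_of_hasSub s t (fun i => Fin (d i) × Fin m) M b _
      (hasSub_copies s t (fun i => Fin (d i)) S hinj m _)
    have h2 := hM'.2 U hU
    have h3 : M.subDim U = fun i => m * (S i).card := by
      funext i
      rw [hU', Fintype.card_coe, Finset.card_product, Finset.card_univ, Fintype.card_fin, mul_comm]
    rw [h3, pair_mul] at h2
    exact absurd h2 (not_le.2 (mul_pos hm' hS))
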